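/- For all integers l ≥ 1 and n ≥ 0, ∑_{r=0}^{n} (-1)^r · (n!/(n-r)!) / (3^r · l·(l+1)···(l+r)) = (n! · (2/3)^n / (n+l)!) · ∑_{b=0}^{n} ((l+b-1)!/b!) · (3/2)^b. -/

import Mathlib

/-!
Both sides satisfy the recurrence `(l + n + 1) C(n + 1) = 1 + (2 (n + 1) / 3) C(n)` and equal `1 / l`
at `n = 0`. For the right-hand side this amounts to splitting off the last summand. For the left-hand
side, with `t n r` its `r`-th summand, the recurrence telescopes in `r`:
`(l + n + 1) t (n + 1) r - (2 (n + 1) / 3) t n r = G r - G (r + 1)` where `G r = (l + r) t (n + 1) r`,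
and `G 0 = 1`, `G (n + 2) = 0`.
-/

/-- The `r`-th summand of Catalan's formula for `l` legitimate and `n` illegitimate children. -/
def catalanTerm (l n r : ℕ) : ℚ :=
  (-1) ^ r * (Nat.descFactorial n r : ℚ) /
    (3 ^ r * ∏ i ∈ Finset.range (r + 1), ((l + i : ℕ) : ℚ))

lemma catalanTerm_zero (l n : ℕ) : catalanTerm l n 0 = 1 / l := by
  simp [catalanTerm]

lemma catalanTerm_eq_zero (l : ℕ) {n r : ℕ} (h : n < r) : catalanTerm l n r = 0 := by
  simp [catalanTerm, Nat.descFactorial_of_lt h]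

lemma catalanTerm_succ_right (l n r : ℕ) (hl : 1 ≤ l) :
    (l + r + 1) * catalanTerm l n (r + 1) = -((n - r) / 3) * catalanTerm l n r := by
  have hprod : (∏ i ∈ Finset.range (r + 1), ((l + i : ℕ) : ℚ)) ≠ 0 :=
    Finset.prod_ne_zero_iff.2 fun i _ => by positivity
  have hlr : (l + r + 1 : ℚ) ≠ 0 := by positivity
  -- For `r > n` the truncated `n - r` differs from the rational one, but both sides vanish.
  have hdesc : (Nat.descFactorial n (r + 1) : ℚ) = (n - r) * Nat.descFactorial n r := by
    rcases le_or_gt r n with h | h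
    · rw [Nat.descFactorial_succ]
      push_cast [h]
      ring
    · simp [Nat.descFactorial_of_lt h]
  unfold catalanTerm
  rw [Finset.prod_range_succ _ (r + 1), hdesc]
  generalize (∏ i ∈ Finset.range (r + 1), ((l + i : ℕ) : ℚ)) = P at *
  push_cast
  rw [← add_assoc]
  field_simp
  ring

lemma catalanTerm_succ_left (l n r : ℕ) :
    (n + 1) * catalanTerm l n r = (n + 1 - r) * catalanTerm l (n + 1) r := by
  have hdesc : (n + 1 : ℚ) * Nat.descFactorial n r
      = (n + 1 - r) * Nat.descFactorial (n + 1) r := by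
    rcases le_or_gt r (n + 1) with h | h
    · have := Nat.succ_descFactorial n r
      have h' : (((n + 1 - r) * (n + 1).descFactorial r : ℕ) : ℚ)
          = ((n + 1) * n.descFactorial r : ℕ) := congrArg _ this
      push_cast [h] at h'
      exact h'.symm
    · simp [Nat.descFactorial_of_lt h, Nat.descFactorial_of_lt (show n < r by omega)]
  unfold catalanTerm
  linear_combination ((-1) ^ r / (3 ^ r * ∏ i ∈ Finset.range (r + 1), ((l + i : ℕ) : ℚ))) * hdesc

lemma catalanTerm_telescope (l n m : ℕ) (hl : 1 ≤ l) :
    (l + n + 1) * ∑ r ∈ Finset.range m, catalanTerm l (n + 1) r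
      - 2 * (n + 1) / 3 * ∑ r ∈ Finset.range m, catalanTerm l n r
      = 1 - (l + m) * catalanTerm l (n + 1) m := by
  induction m with
  | zero =>
    have : (l : ℚ) ≠ 0 := by positivity
    simp [catalanTerm_zero, this]
  | succ m ih =>
    have h1 := catalanTerm_succ_right l (n + 1) m hl
    have h2 := catalanTerm_succ_left l n m
    rw [Finset.sum_range_succ, Finset.sum_range_succ]
    push_cast at h1 ⊢
    linear_combination ih + h1 - 2 / 3 * h2

lemma catalanTerm_sum_succ (l n : ℕ) (hl : 1 ≤ l) :
    (l + n + 1) * ∑ r ∈ Finset.range (n + 2), catalanTerm l (n + 1) r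
      = 1 + 2 * (n + 1) / 3 * ∑ r ∈ Finset.range (n + 1), catalanTerm l n r := by
  have h := catalanTerm_telescope l n (n + 2) hl
  rw [catalanTerm_eq_zero l (show n + 1 < n + 2 by omega),
    Finset.sum_range_succ (catalanTerm l n), catalanTerm_eq_zero l (Nat.lt_succ_self n)] at h
  linear_combination h

theorem catalanShare_alternative_formula (l n : ℕ) (hl : 1 ≤ l) :
    (∑ r ∈ Finset.range (n + 1),
        (-1) ^ r * (Nat.descFactorial n r : ℚ) /
          (3 ^ r * ∏ i ∈ Finset.range (r + 1), ((l + i : ℕ) : ℚ))) =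
      (Nat.factorial n : ℚ) * (2 / 3) ^ n / (Nat.factorial (n + l) : ℚ) *
        ∑ b ∈ Finset.range (n + 1),
          (Nat.factorial (l + b - 1) : ℚ) / (Nat.factorial b : ℚ) * (3 / 2) ^ b := by
  change ∑ r ∈ Finset.range (n + 1), catalanTerm l n r = _
  induction n with
  | zero =>
    obtain ⟨k, rfl⟩ : ∃ k, l = k + 1 := ⟨l - 1, by omega⟩
    have : (k.factorial : ℚ) ≠ 0 := by positivity
    have : (k + 1 : ℚ) ≠ 0 := by positivity
    simp [catalanTerm_zero, Nat.factorial_succ]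
    field_simp
  | succ n ih =>
    have hne : (l + n + 1 : ℚ) ≠ 0 := by positivity
    apply mul_left_cancel₀ hne
    rw [catalanTerm_sum_succ l n hl, ih, Finset.sum_range_succ _ (n + 1),
      show l + (n + 1) - 1 = n + l by omega, show n + 1 + l = (n + l) + 1 by omega,
      Nat.factorial_succ (n + l), Nat.factorial_succ n]
    generalize (∑ b ∈ Finset.range (n + 1),
      (Nat.factorial (l + b - 1) : ℚ) / (Nat.factorial b : ℚ) * (3 / 2) ^ b) = S
    have h1 : ((n + l).factorial : ℚ) ≠ 0 := by positivity
    have h2 : (n.factorial : ℚ) ≠ 0 := by positivity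
    have h3 : (n + 1 : ℚ) ≠ 0 := by positivity
    have h4 : (n + l + 1 : ℚ) ≠ 0 := by positivity
    have h5 : (2 / 3 : ℚ) ^ (n + 1) * (3 / 2) ^ (n + 1) = 1 := by
      rw [← mul_pow]; norm_num
    push_cast
    rw [show (l + n + 1 : ℚ) = n + l + 1 by ring]
    generalize (3 / 2 : ℚ) ^ (n + 1) = y at *
    rw [pow_succ] at *
    generalize (2 / 3 : ℚ) ^ n = x at *
    field_simp at h5 ⊢
    linear_combination -((n + l).factorial : ℚ) * h5
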